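/- Soundness of the monotonicity inference system, negative case: if the judgment {sys} ⊢ φ : ⊖ is derivable for a closed formula φ of the extended logic (with the fix construct), then φ is ⊖-monotone. -/

import Mathlib

/-!
The theorem is an instance of a statement about arbitrary assignments. Let `T ⊆ T'`, let `D` and `D'`
be set assignments with `D Y ⊆ D' Y` and `D Y ⊆ T` for every `Y`, and let `P` map every free trace
variable of `φ` into the smaller system `T`. Then `Γ ⊢ φ : ⊕` transfers satisfaction of `φ` from
`(T, D)` to `(T', D')`, and `Γ ⊢ φ : ⊖` transfers it back (`Judg.transfer`). The proof is by induction
on the derivation.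

* First-order quantifiers: the traces instantiated come from the smaller assignment `D`, so `P` keeps
  its values in `T`.
* Second-order quantifiers: a subset of `T` is a subset of `T'`; conversely a subset `A` of `T'` is
  replaced by `A ∩ T`. No condition relating the bound variable to `Γ` is needed because the order
  on assignments is pointwise in all set variables.
* `fix`: the least solution is monotone (`solSet_mono`) and is contained in `T` (`solSet_subset`).
  For monotonicity, if `A` solves the constraints over `(T', D')`, then `A ∩ T` solves them over
  `(T, D)`: the binders range over smaller sets, and the target trace lies in `T`, being either bound
  by a binder or a value of `P` at a free variable. This is where closedness enters: a free target
  could be a trace outside `T`.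
-/

namespace Hyper2LTLf

/-- A finite trace of length `m` over atomic propositions `AP`. -/
abbrev Trace (AP : Type) (m : ℕ) : Type := Fin m → Set AP

/-- Quantifier-free formulas (used as step formulas of fixpoint constraints). -/
inductive QF (AP : Type) : Type
  | atom : AP → ℕ → QF AP
  | neg  : QF AP → QF AP
  | conj : QF AP → QF AP → QF AP
  | nxt  : QF AP → QF AP
  | prv  : QF AP → QF AP
  | untl : QF AP → QF AP → QF AP
  | snce : QF AP → QF AP → QF AP

/-- The distinguished second-order variable `sys`. -/
def sysVar : ℕ := 0

variable {AP : Type}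

/-- Finite-trace satisfaction of quantifier-free formulas. -/
def SatQF {m : ℕ} : (ℕ → Trace AP m) → ℕ → QF AP → Prop
  | P, i, .atom a v => ∃ h : i < m, a ∈ P v ⟨i, h⟩
  | P, i, .neg φ => ¬ SatQF P i φ
  | P, i, .conj φ ψ => SatQF P i φ ∧ SatQF P i ψ
  | P, i, .nxt φ => i + 1 < m ∧ SatQF P (i + 1) φ
  | P, i, .prv φ => 0 < i ∧ SatQF P (i - 1) φ
  | P, i, .untl φ ψ =>
      ∃ j, i ≤ j ∧ j < m ∧ SatQF P j ψ ∧ ∀ k, i ≤ k → k < j → SatQF P k φ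
  | P, i, .snce φ ψ =>
      ∃ j, j ≤ i ∧ SatQF P j ψ ∧ ∀ k, j < k → k ≤ i → SatQF P k φ

/-- A fixpoint constraint `∀π₁∈X₁ … ∀πₙ∈Xₙ. φ_step → π ∈ X` for the set
variable `X` of the enclosing `fix`: `binders` is the list `(π₁,X₁),…,(πₙ,Xₙ)`,
`step` is the quantifier-free formula `φ_step`, and `target` is `π`. -/
structure Constraint (AP : Type) : Type where
  binders : List (ℕ × ℕ)
  step : QF AP
  target : ℕ

/-- Satisfaction of the universally quantified implication of a constraint, where
`X` is the set variable of the enclosing `fix` (the conclusion is `P π ∈ D X`). -/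
def SatBinders {m : ℕ} (D : ℕ → Set (Trace AP m)) (i : ℕ) (X : ℕ) :
    (ℕ → Trace AP m) → List (ℕ × ℕ) → QF AP → ℕ → Prop
  | P, [], step, tgt => SatQF P i step → P tgt ∈ D X
  | P, (v, Y) :: rest, step, tgt =>
      ∀ t ∈ D Y, SatBinders D i X (Function.update P v t) rest step tgt

/-- `Π, Δ, i ⊨_𝕋 ξ` for a fixpoint constraint `ξ` of the fix-variable `X`. -/
def SatConstraint {m : ℕ} (D : ℕ → Set (Trace AP m)) (i : ℕ) (X : ℕ)
    (P : ℕ → Trace AP m) (c : Constraint AP) : Prop :=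
  SatBinders D i X P c.binders c.step c.target

/-- `sol(Π,Δ,i,X,ξ₁,…,ξ_k)`: the ⊆-least subset `A` of `𝕋` with
`Π, Δ[X↦A], i ⊨_𝕋 ξ_j` for every `j`, as the intersection of all such subsets. -/
def solSet {m : ℕ} (T : Set (Trace AP m)) (P : ℕ → Trace AP m)
    (D : ℕ → Set (Trace AP m)) (i : ℕ) (X : ℕ) (cs : List (Constraint AP)) :
    Set (Trace AP m) :=
  ⋂₀ {A : Set (Trace AP m) | A ⊆ T ∧
        ∀ c ∈ cs, SatConstraint (Function.update D X A) i X P c}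

/-- Syntax of the extended logic Hyper²LTL_f with the `fix` construct. -/
inductive FormulaX (AP : Type) : Type
  | atom  : AP → ℕ → FormulaX AP
  | neg   : FormulaX AP → FormulaX AP
  | conj  : FormulaX AP → FormulaX AP → FormulaX AP
  | nxt   : FormulaX AP → FormulaX AP
  | prv   : FormulaX AP → FormulaX AP
  | untl  : FormulaX AP → FormulaX AP → FormulaX AP
  | snce  : FormulaX AP → FormulaX AP → FormulaX AP
  | exFO  : ℕ → ℕ → FormulaX AP → FormulaX AP   -- ∃ π ∈ X. φ
  | allFO : ℕ → ℕ → FormulaX AP → FormulaX AP   -- ∀ π ∈ X. φ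
  | exSO  : ℕ → FormulaX AP → FormulaX AP        -- ∃ X. φ
  | allSO : ℕ → FormulaX AP → FormulaX AP        -- ∀ X. φ
  | fix   : ℕ → List (Constraint AP) → FormulaX AP → FormulaX AP
      -- fix(X, ξ₁, …, ξ_k). φ

/-- Finite-trace satisfaction `Π, Δ, i ⊨_𝕋 φ` for the extended logic. -/
def SatX {m : ℕ} (T : Set (Trace AP m)) :
    (ℕ → Trace AP m) → (ℕ → Set (Trace AP m)) → ℕ → FormulaX AP → Prop
  | P, _, i, .atom a v => ∃ h : i < m, a ∈ P v ⟨i, h⟩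
  | P, D, i, .neg φ => ¬ SatX T P D i φ
  | P, D, i, .conj φ ψ => SatX T P D i φ ∧ SatX T P D i ψ
  | P, D, i, .nxt φ => i + 1 < m ∧ SatX T P D (i + 1) φ
  | P, D, i, .prv φ => 0 < i ∧ SatX T P D (i - 1) φ
  | P, D, i, .untl φ ψ =>
      ∃ j, i ≤ j ∧ j < m ∧ SatX T P D j ψ ∧ ∀ k, i ≤ k → k < j → SatX T P D k φ
  | P, D, i, .snce φ ψ =>
      ∃ j, j ≤ i ∧ SatX T P D j ψ ∧ ∀ k, j < k → k ≤ i → SatX T P D k φ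
  | P, D, i, .exFO v X φ => ∃ t ∈ D X, SatX T (Function.update P v t) D i φ
  | P, D, i, .allFO v X φ => ∀ t ∈ D X, SatX T (Function.update P v t) D i φ
  | P, D, i, .exSO X φ =>
      ∃ A : Set (Trace AP m), A ⊆ T ∧ SatX T P (Function.update D X A) i φ
  | P, D, i, .allSO X φ =>
      ∀ A : Set (Trace AP m), A ⊆ T → SatX T P (Function.update D X A) i φ
  | P, D, i, .fix X cs φ =>
      SatX T P (Function.update D X (solSet T P D i X cs)) i φ

/-- Top-level satisfaction: `𝕋 ⊨ φ` iff `∅, [sys ↦ 𝕋], 0 ⊨_𝕋 φ`. -/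
def ModelsX {m : ℕ} (T : Set (Trace AP m)) (φ : FormulaX AP) : Prop :=
  SatX T (fun _ _ => (∅ : Set AP)) (fun X => if X = sysVar then T else ∅) 0 φ

/-- Trace variables occurring in a quantifier-free formula. -/
def qfTV : QF AP → Set ℕ
  | .atom _ v => {v}
  | .neg φ => qfTV φ
  | .nxt φ => qfTV φ
  | .prv φ => qfTV φ
  | .conj φ ψ => qfTV φ ∪ qfTV ψ
  | .untl φ ψ => qfTV φ ∪ qfTV ψ
  | .snce φ ψ => qfTV φ ∪ qfTV ψ

/-- Free trace variables of a fixpoint constraint. -/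
def freeTVC (c : Constraint AP) : Set ℕ :=
  (qfTV c.step ∪ {c.target}) \ {v | ∃ p ∈ c.binders, p.1 = v}

/-- Set variables occurring in a fixpoint constraint (its binders). -/
def svC (c : Constraint AP) : Set ℕ := {Y | ∃ p ∈ c.binders, p.2 = Y}

/-- Free trace variables. -/
def freeTVX : FormulaX AP → Set ℕ
  | .atom _ v => {v}
  | .neg φ => freeTVX φ
  | .nxt φ => freeTVX φ
  | .prv φ => freeTVX φ
  | .conj φ ψ => freeTVX φ ∪ freeTVX ψ
  | .untl φ ψ => freeTVX φ ∪ freeTVX ψ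
  | .snce φ ψ => freeTVX φ ∪ freeTVX ψ
  | .exFO v _ φ => freeTVX φ \ {v}
  | .allFO v _ φ => freeTVX φ \ {v}
  | .exSO _ φ => freeTVX φ
  | .allSO _ φ => freeTVX φ
  | .fix _ cs φ => freeTVX φ ∪ {v | ∃ c ∈ cs, v ∈ freeTVC c}

/-- Free set variables. -/
def freeSVX : FormulaX AP → Set ℕ
  | .atom _ _ => ∅
  | .neg φ => freeSVX φ
  | .nxt φ => freeSVX φ
  | .prv φ => freeSVX φ
  | .conj φ ψ => freeSVX φ ∪ freeSVX ψ
  | .untl φ ψ => freeSVX φ ∪ freeSVX ψ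
  | .snce φ ψ => freeSVX φ ∪ freeSVX ψ
  | .exFO _ X φ => insert X (freeSVX φ)
  | .allFO _ X φ => insert X (freeSVX φ)
  | .exSO X φ => freeSVX φ \ {X}
  | .allSO X φ => freeSVX φ \ {X}
  | .fix X cs φ => (freeSVX φ ∪ {Y | ∃ c ∈ cs, Y ∈ svC c}) \ {X}

/-- A formula is closed if it has no free trace variables and its only
(possibly) free set variable is `sys`. -/
def ClosedX (φ : FormulaX AP) : Prop := freeTVX φ = ∅ ∧ freeSVX φ ⊆ {sysVar}

/-- `⊕`-monotonicity. -/
def PlusMonotoneX (φ : FormulaX AP) : Prop :=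
  ∀ (m : ℕ) (T T' : Set (Trace AP m)), T ⊆ T' → ModelsX T φ → ModelsX T' φ

/-- `⊖`-monotonicity. -/
def MinusMonotoneX (φ : FormulaX AP) : Prop :=
  ∀ (m : ℕ) (T T' : Set (Trace AP m)), T ⊆ T' → ¬ ModelsX T φ → ¬ ModelsX T' φ

/-- The monotonicity inference system. `Judg Γ φ α` formalizes `Γ ⊢ φ : α`,
where `α = true` stands for `⊕` and `α = false` stands for `⊖`. -/
inductive Judg {AP : Type} : Set ℕ → FormulaX AP → Bool → Prop
  | atom {Γ : Set ℕ} (a : AP) (v : ℕ) (α : Bool) : Judg Γ (.atom a v) α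
  | negPlus {Γ : Set ℕ} {φ : FormulaX AP} :
      Judg Γ φ true → Judg Γ (.neg φ) false
  | negMinus {Γ : Set ℕ} {φ : FormulaX AP} :
      Judg Γ φ false → Judg Γ (.neg φ) true
  | nxt {Γ : Set ℕ} {φ : FormulaX AP} {α : Bool} :
      Judg Γ φ α → Judg Γ (.nxt φ) α
  | prv {Γ : Set ℕ} {φ : FormulaX AP} {α : Bool} :
      Judg Γ φ α → Judg Γ (.prv φ) α
  | conj {Γ : Set ℕ} {φ ψ : FormulaX AP} {α : Bool} :
      Judg Γ φ α → Judg Γ ψ α → Judg Γ (.conj φ ψ) α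
  | untl {Γ : Set ℕ} {φ ψ : FormulaX AP} {α : Bool} :
      Judg Γ φ α → Judg Γ ψ α → Judg Γ (.untl φ ψ) α
  | snce {Γ : Set ℕ} {φ ψ : FormulaX AP} {α : Bool} :
      Judg Γ φ α → Judg Γ ψ α → Judg Γ (.snce φ ψ) α
  | exFO {Γ : Set ℕ} {v X : ℕ} {φ : FormulaX AP} :
      X ∈ Γ → Judg Γ φ true → Judg Γ (.exFO v X φ) true
  | allFO {Γ : Set ℕ} {v X : ℕ} {φ : FormulaX AP} :
      X ∈ Γ → Judg Γ φ false → Judg Γ (.allFO v X φ) false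
  | fix {Γ : Set ℕ} {X : ℕ} {cs : List (Constraint AP)} {φ : FormulaX AP} {α : Bool} :
      Judg (insert X Γ) φ α → Judg Γ (.fix X cs φ) α
  | exSO {Γ : Set ℕ} {X : ℕ} {φ : FormulaX AP} {α : Bool} :
      Judg Γ φ α → Judg Γ (.exSO X φ) α
  | allSO {Γ : Set ℕ} {X : ℕ} {φ : FormulaX AP} {α : Bool} :
      Judg Γ φ α → Judg Γ (.allSO X φ) α

/-! ### Least solutions of fixpoint constraints -/

variable {m : ℕ}

/-- A constraint over a larger set assignment `D'` is inherited by a smaller one `D` with values in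
`T`, as long as the target is bound or assigned in `T` and `D X` contains `D' X ∩ T`. -/
lemma SatBinders.restrict {T : Set (Trace AP m)} {D D' : ℕ → Set (Trace AP m)} {i X : ℕ}
    (hD : ∀ Y, D Y ⊆ D' Y) (hDT : ∀ Y, D Y ⊆ T) (hX : D' X ∩ T ⊆ D X)
    {step : QF AP} {tgt : ℕ} (bs : List (ℕ × ℕ)) (P : ℕ → Trace AP m)
    (hP : (∀ p ∈ bs, p.1 ≠ tgt) → P tgt ∈ T)
    (h : SatBinders D' i X P bs step tgt) : SatBinders D i X P bs step tgt := by
  induction bs generalizing P with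
  | nil =>
    intro hs
    exact hX ⟨h hs, hP (by simp)⟩
  | cons b rest ih =>
    obtain ⟨v, Y⟩ := b
    intro t ht
    refine ih _ (fun hr => ?_) (h t (hD Y ht))
    by_cases hv : tgt = v
    · subst hv
      simpa using hDT Y ht
    · rw [Function.update_of_ne hv]
      refine hP fun p hp => ?_
      rcases List.mem_cons.1 hp with rfl | hp
      · exact fun h' => hv h'.symm
      · exact hr p hp

lemma satBinders_univ (i X : ℕ) (step : QF AP) (tgt : ℕ) (bs : List (ℕ × ℕ))
    (P : ℕ → Trace AP m) : SatBinders (fun _ => Set.univ) i X P bs step tgt := by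
  induction bs generalizing P with
  | nil => exact fun _ => trivial
  | cons b rest ih => exact fun t _ => ih _

lemma target_mem {T : Set (Trace AP m)} {P : ℕ → Trace AP m} {c : Constraint AP}
    (hP : ∀ v ∈ freeTVC c, P v ∈ T) (h : ∀ p ∈ c.binders, p.1 ≠ c.target) : P c.target ∈ T :=
  hP _ ⟨Or.inr rfl, fun ⟨p, hp, he⟩ => h p hp he⟩

lemma update_subset {D : ℕ → Set (Trace AP m)} {D' : ℕ → Set (Trace AP m)} (hD : ∀ Y, D Y ⊆ D' Y)
    {A A' : Set (Trace AP m)} (hA : A ⊆ A') (X Y : ℕ) :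
    Function.update D X A Y ⊆ Function.update D' X A' Y := by
  by_cases h : Y = X
  · subst h
    simpa using hA
  · simpa [Function.update_of_ne h] using hD Y

lemma update_subset_const {D : ℕ → Set (Trace AP m)} {T : Set (Trace AP m)} (hD : ∀ Y, D Y ⊆ T)
    {A : Set (Trace AP m)} (hA : A ⊆ T) (X Y : ℕ) : Function.update D X A Y ⊆ T := by
  by_cases h : Y = X
  · subst h
    simpa using hA
  · simpa [Function.update_of_ne h] using hD Y

/-- The full system `T` satisfies all constraints, so the intersection defining `solSet` is over a
nonempty family and stays within `T`. -/
lemma solSet_subset {T : Set (Trace AP m)} {P : ℕ → Trace AP m} {D : ℕ → Set (Trace AP m)}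
    {i X : ℕ} {cs : List (Constraint AP)} (hDT : ∀ Y, D Y ⊆ T)
    (hP : ∀ c ∈ cs, ∀ v ∈ freeTVC c, P v ∈ T) : solSet T P D i X cs ⊆ T := by
  refine Set.sInter_subset_of_mem ⟨subset_rfl, fun c hc => ?_⟩
  refine SatBinders.restrict (T := T) (D' := fun _ => Set.univ) (fun Y => Set.subset_univ _)
    (update_subset_const hDT subset_rfl X) ?_ _ _ (target_mem (hP c hc)) (satBinders_univ ..)
  simp

lemma solSet_mono {T T' : Set (Trace AP m)} {P : ℕ → Trace AP m} {D D' : ℕ → Set (Trace AP m)}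
    {i X : ℕ} {cs : List (Constraint AP)} (hD : ∀ Y, D Y ⊆ D' Y) (hDT : ∀ Y, D Y ⊆ T)
    (hP : ∀ c ∈ cs, ∀ v ∈ freeTVC c, P v ∈ T) :
    solSet T P D i X cs ⊆ solSet T' P D' i X cs := by
  refine Set.subset_sInter fun A hA => ?_
  have key : solSet T P D i X cs ⊆ A ∩ T := by
    refine Set.sInter_subset_of_mem ⟨Set.inter_subset_right, fun c hc => ?_⟩
    refine SatBinders.restrict (T := T) (update_subset hD Set.inter_subset_left X)
      (update_subset_const hDT Set.inter_subset_right X) ?_ _ _ (target_mem (hP c hc)) (hA.2 c hc)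
    simp
  exact key.trans Set.inter_subset_left

lemma update_mem {T : Set (Trace AP m)} {P : ℕ → Trace AP m} {S : Set ℕ} {v : ℕ} {t : Trace AP m}
    (hP : ∀ w ∈ S \ {v}, P w ∈ T) (ht : t ∈ T) : ∀ w ∈ S, Function.update P v t w ∈ T := by
  intro w hw
  by_cases h : w = v
  · subst h
    simpa using ht
  · simpa [Function.update_of_ne h] using hP w ⟨hw, h⟩

/-! ### Soundness -/

/-- `Transfer α p q` is the direction in which polarity `α` transports truth from the
smaller model (`p`) to the larger one (`q`): `p → q` for `⊕`, and `q → p` for `⊖`. -/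
def Transfer : Bool → Prop → Prop → Prop
  | true, p, q => p → q
  | false, p, q => q → p

/-- Soundness of the inference system for open formulas, for both polarities at once. -/
lemma Judg.transfer {Γ : Set ℕ} {φ : FormulaX AP} {α : Bool} (h : Judg Γ φ α)
    {T T' : Set (Trace AP m)} (hT : T ⊆ T') (P : ℕ → Trace AP m) (D D' : ℕ → Set (Trace AP m))
    (i : ℕ) (hD : ∀ Y, D Y ⊆ D' Y) (hDT : ∀ Y, D Y ⊆ T) (hP : ∀ v ∈ freeTVX φ, P v ∈ T) :
    Transfer α (SatX T P D i φ) (SatX T' P D' i φ) := by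
  induction h generalizing P D D' i with
  | atom a v α => cases α <;> exact id
  | negPlus _ ih =>
    exact fun hn hs => hn (ih P D D' i hD hDT hP hs)
  | negMinus _ ih =>
    exact fun hn hs => hn (ih P D D' i hD hDT hP hs)
  | @nxt _ _ α _ ih =>
    cases α <;> exact fun hs => ⟨hs.1, ih P D D' _ hD hDT hP hs.2⟩
  | @prv _ _ α _ ih =>
    cases α <;> exact fun hs => ⟨hs.1, ih P D D' _ hD hDT hP hs.2⟩
  | @conj _ _ _ α _ _ ih₁ ih₂ =>
    have h₁ := fun j => ih₁ P D D' j hD hDT fun v hv => hP v (Or.inl hv)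
    have h₂ := fun j => ih₂ P D D' j hD hDT fun v hv => hP v (Or.inr hv)
    cases α <;> exact fun hs => ⟨h₁ _ hs.1, h₂ _ hs.2⟩
  | @untl _ _ _ α _ _ ih₁ ih₂ =>
    have h₁ := fun j => ih₁ P D D' j hD hDT fun v hv => hP v (Or.inl hv)
    have h₂ := fun j => ih₂ P D D' j hD hDT fun v hv => hP v (Or.inr hv)
    cases α <;> exact fun ⟨j, hij, hjm, hj, hk⟩ =>
      ⟨j, hij, hjm, h₂ j hj, fun k h h' => h₁ k (hk k h h')⟩
  | @snce _ _ _ α _ _ ih₁ ih₂ =>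
    have h₁ := fun j => ih₁ P D D' j hD hDT fun v hv => hP v (Or.inl hv)
    have h₂ := fun j => ih₂ P D D' j hD hDT fun v hv => hP v (Or.inr hv)
    cases α <;> exact fun ⟨j, hij, hj, hk⟩ =>
      ⟨j, hij, h₂ j hj, fun k h h' => h₁ k (hk k h h')⟩
  | exFO _ _ ih =>
    exact fun ⟨t, ht, hs⟩ =>
      ⟨t, hD _ ht, ih _ D D' i hD hDT (update_mem hP (hDT _ ht)) hs⟩
  | allFO _ _ ih =>
    exact fun hs t ht => ih _ D D' i hD hDT (update_mem hP (hDT _ ht)) (hs t (hD _ ht))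
  | @fix _ X cs φ α _ ih =>
    have hc : ∀ c ∈ cs, ∀ v ∈ freeTVC c, P v ∈ T :=
      fun c hc v hv => hP v (Or.inr ⟨c, hc, hv⟩)
    exact ih P _ _ i (update_subset hD (solSet_mono hD hDT hc) X)
      (update_subset_const hDT (solSet_subset hDT hc) X) fun v hv => hP v (Or.inl hv)
  | @exSO _ X φ α _ ih =>
    cases α
    · exact fun ⟨A, _, hs⟩ => ⟨A ∩ T, Set.inter_subset_right,
        ih P _ _ i (update_subset hD Set.inter_subset_left X)
          (update_subset_const hDT Set.inter_subset_right X) hP hs⟩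
    · exact fun ⟨A, hA, hs⟩ => ⟨A, hA.trans hT,
        ih P _ _ i (update_subset hD subset_rfl X) (update_subset_const hDT hA X) hP hs⟩
  | @allSO _ X φ α _ ih =>
    cases α
    · exact fun hs A hA =>
        ih P _ _ i (update_subset hD subset_rfl X) (update_subset_const hDT hA X) hP
          (hs A (hA.trans hT))
    · exact fun hs A _ =>
        ih P _ _ i (update_subset hD Set.inter_subset_left X)
          (update_subset_const hDT Set.inter_subset_right X) hP
          (hs (A ∩ T) Set.inter_subset_right)

/-- soundness of the monotonicity inference system, negative case:
if `{sys} ⊢ φ : ⊖` is derivable for a closed formula `φ` of the extended logic,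
then `φ` is ⊖-monotone. -/
theorem inference_sound_minus {AP : Type} [Fintype AP]
    (φ : FormulaX AP) (hclosed : ClosedX φ)
    (h : Judg ({sysVar} : Set ℕ) φ false) :
    MinusMonotoneX φ := by
  intro m T T' hT hn hs
  refine hn (h.transfer hT _ _ _ 0 (fun Y => ?_) (fun Y => ?_) ?_ hs)
  · by_cases hY : Y = sysVar <;> simp [hY, hT]
  · by_cases hY : Y = sysVar <;> simp [hY]
  · simp [hclosed.1]

end Hyper2LTLf
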